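/- Let H be a finite abelian group of odd order with K(H) = K*(H) and Σ_{d | exp(H)} 1/d < 2. Then K(C_2 ⊕ H) = K*(C_2 ⊕ H). -/

import Mathlib

open Multiset Pointwise

/-- Cross number of a sequence (multiset) over an additive group. -/
noncomputable def crossNum {G : Type*} [AddCommGroup G] (S : Multiset G) : ℚ :=
  (S.map (fun g => (1 : ℚ) / (addOrderOf g : ℚ))).sum

/-- A sequence is zero-sum free if no non-empty subsequence sums to zero. -/
def IsZeroSumFree {G : Type*} [AddCommGroup G] (S : Multiset G) : Prop :=
  ∀ T : Multiset G, T ≤ S → T ≠ 0 → T.sum ≠ (0 : G)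

/-- A minimal zero-sum sequence: non-trivial, sum zero, no proper non-trivial
zero-sum subsequence. -/
def IsMinZeroSum {G : Type*} [AddCommGroup G] (S : Multiset G) : Prop :=
  S ≠ 0 ∧ S.sum = 0 ∧ ∀ T : Multiset G, T < S → T ≠ 0 → T.sum ≠ (0 : G)

/-- `wSet G` : set of cross numbers of non-trivial zero-sum free sequences over `G`. -/
def wSet (G : Type*) [AddCommGroup G] : Set ℚ :=
  { k | ∃ S : Multiset G, S ≠ 0 ∧ IsZeroSumFree S ∧ crossNum S = k }

/-- `WSet G` : set of cross numbers of minimal zero-sum sequences over `G`. -/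
def WSet (G : Type*) [AddCommGroup G] : Set ℚ :=
  { k | ∃ S : Multiset G, IsMinZeroSum S ∧ crossNum S = k }

/-- Symmetric reformulation of minimality. -/
lemma mz_iff {G : Type*} [AddCommGroup G] (S : Multiset G) :
    IsMinZeroSum S ↔ S ≠ 0 ∧ S.sum = 0 ∧ ∀ U V : Multiset G, S = U + V → U.sum = 0 → U = 0 ∨ V = 0 := by
  constructor
  · rintro ⟨h0, hs, hm⟩
    refine ⟨h0, hs, fun U V hUV hU => ?_⟩
    by_contra! hc
    refine hm U ?_ hc.1 hU
    rw [hUV]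
    exact lt_add_of_pos_right U (pos_iff_ne_zero.mpr hc.2)
  · rintro ⟨h0, hs, hm⟩
    refine ⟨h0, hs, fun T hT hT0 hTs => ?_⟩
    obtain ⟨V, hV⟩ := Multiset.le_iff_exists_add.mp hT.le
    rcases hm T V hV hTs with h | h
    · exact hT0 h
    · subst h
      simp at hV
      exact hT.ne hV.symm

lemma mz_merge {G : Type*} [AddCommGroup G] (X M : Multiset G) (hX : X ≠ 0)
    (h : IsMinZeroSum (X + M)) : IsMinZeroSum (X.sum ::ₘ M) := by
  rw [mz_iff] at h ⊢
  obtain ⟨h0, hs, hm⟩ := h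
  have key : ∀ U V : Multiset G, X.sum ::ₘ M = U + V → U.sum = 0 → X.sum ∈ U → V = 0 := by
    intro U V hUV hU hmem
    obtain ⟨U', rfl⟩ := Multiset.exists_cons_of_mem hmem
    rw [Multiset.cons_add, Multiset.cons_inj_right] at hUV
    subst hUV
    rcases hm (X + U') V (by rw [add_assoc]) (by simpa using hU) with h | h
    · exact absurd (by simpa using h : X = 0 ∧ U' = 0).1 hX
    · exact h
  refine ⟨by simp, by simpa using hs, fun U V hUV hU => ?_⟩
  have hV : V.sum = 0 := by
    have := congrArg Multiset.sum hUV
    simp [hU] at this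
    rw [← this]; simpa using hs
  have : X.sum ∈ U + V := by rw [← hUV]; simp
  rcases Multiset.mem_add.mp this with h | h
  · exact Or.inr (key U V hUV hU h)
  · exact Or.inl (key V U (by rw [hUV, add_comm]) hV h)

lemma mz_of_map {G H : Type*} [AddCommGroup G] [AddCommGroup H] (f : H →+ G)
    (hf : Function.Injective f) (A : Multiset H) (h : IsMinZeroSum (A.map f)) :
    IsMinZeroSum A := by
  rw [mz_iff] at h ⊢
  obtain ⟨h0, hs, hm⟩ := h
  refine ⟨by simpa using h0, ?_, fun U V hUV hU => ?_⟩
  · apply hf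
    rw [_root_.map_zero, ← hs, map_multiset_sum]
  · have := hm (U.map f) (V.map f) (by rw [hUV, Multiset.map_add])
      (by rw [← map_multiset_sum, hU, _root_.map_zero])
    simpa using this

lemma mz_cons {G : Type*} [AddCommGroup G] (g : G) (R : Multiset G)
    (hR : IsZeroSumFree R) (hs : g + R.sum = 0) : IsMinZeroSum (g ::ₘ R) := by
  rw [mz_iff]
  refine ⟨by simp, by simpa using hs, ?_⟩
  have key : ∀ U V : Multiset G, g ::ₘ R = U + V → V.sum = 0 → g ∈ U → V = 0 := by
    intro U V hUV hV hmem
    obtain ⟨U', rfl⟩ := Multiset.exists_cons_of_mem hmem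
    rw [Multiset.cons_add, Multiset.cons_inj_right] at hUV
    by_contra hne
    exact hR V (by rw [hUV]; exact Multiset.le_add_left _ _) hne hV
  intro U V hUV hU
  have hV : V.sum = 0 := by
    have := congrArg Multiset.sum hUV
    simp [hU] at this
    rw [← this]; simpa using hs
  have : g ∈ U + V := by rw [← hUV]; simp
  rcases Multiset.mem_add.mp this with h | h
  · exact Or.inr (key U V hUV hV h)
  · exact Or.inl (key V U (by rw [hUV, add_comm]) hU h)

lemma exists_of_le_map {α β : Type*} (f : α → β) (R : Multiset α) (U V : Multiset β)
    (h : R.map f = U + V) : ∃ U' V', R = U' + V' ∧ U'.map f = U ∧ V'.map f = V := by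
  induction R using Multiset.induction_on generalizing U V with
  | empty =>
    have : U = 0 ∧ V = 0 := by simpa using h.symm
    exact ⟨0, 0, by simp, by simp [this.1], by simp [this.2]⟩
  | cons a R ih =>
    have hm : f a ∈ U + V := by rw [← h]; simp
    rcases Multiset.mem_add.mp hm with hU | hV
    · obtain ⟨U1, rfl⟩ := Multiset.exists_cons_of_mem hU
      rw [Multiset.map_cons, Multiset.cons_add, Multiset.cons_inj_right] at h
      obtain ⟨U', V', h1, h2, h3⟩ := ih U1 V h
      exact ⟨a ::ₘ U', V', by simp [h1], by simp [h2], h3⟩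
    · obtain ⟨V1, rfl⟩ := Multiset.exists_cons_of_mem hV
      rw [Multiset.map_cons, Multiset.add_cons, Multiset.cons_inj_right] at h
      obtain ⟨U', V', h1, h2, h3⟩ := ih U V1 h
      exact ⟨U', a ::ₘ V', by simp [h1], h2, by simp [h3]⟩

lemma crossNum_cons {G : Type*} [AddCommGroup G] (g : G) (S : Multiset G) :
    crossNum (g ::ₘ S) = 1 / (addOrderOf g : ℚ) + crossNum S := by
  simp [crossNum]

lemma crossNum_add {G : Type*} [AddCommGroup G] (S T : Multiset G) :
    crossNum (S + T) = crossNum S + crossNum T := by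
  simp [crossNum]

/-- If two members share a value under `f`, split them off. -/
lemma exists_pair {α β : Type*} (f : α → β) (B : Multiset α) (h : ¬ (B.map f).Nodup) :
    ∃ a b B', B = a ::ₘ b ::ₘ B' ∧ f a = f b := by
  rw [Multiset.nodup_iff_ne_cons_cons] at h
  push Not at h
  obtain ⟨x, t, ht⟩ := h
  obtain ⟨a, ha, hax⟩ := Multiset.mem_map.mp (by rw [ht]; simp : x ∈ B.map f)
  obtain ⟨B1, rfl⟩ := Multiset.exists_cons_of_mem ha
  rw [Multiset.map_cons, hax, Multiset.cons_inj_right] at ht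
  obtain ⟨b, hb, hbx⟩ := Multiset.mem_map.mp (by rw [ht]; simp : x ∈ B1.map f)
  obtain ⟨B2, rfl⟩ := Multiset.exists_cons_of_mem hb
  exact ⟨a, b, B2, rfl, by rw [hax, hbx]⟩

lemma sum_map_mk_one {H : Type*} [AddCommGroup H] (B : Multiset H) :
    (B.map (fun h => ((1 : ZMod 2), h))).sum = ((B.card : ZMod 2), B.sum) := by
  induction B using Multiset.induction_on with
  | empty => simp; rfl
  | cons a B ih => simp [ih, add_comm]

lemma sum_map_mk_zero {H : Type*} [AddCommGroup H] (B : Multiset H) :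
    (B.map (fun h => ((0 : ZMod 2), h))).sum = ((0 : ZMod 2), B.sum) := by
  induction B using Multiset.induction_on with
  | empty => simp; rfl
  | cons a B ih => simp [ih]

lemma pair_bound {H : Type*} [AddCommGroup H] [Fintype H] (c : ℚ)
    (hW : ∀ k ∈ WSet H, k ≤ 1 / (AddMonoid.exponent H : ℚ) + c)
    (hdiv : ∑ d ∈ (AddMonoid.exponent H).divisors, (1 : ℚ) / (d : ℚ) < 2) :
    ∀ (N : ℕ) (A B : Multiset H), B.card = N →
      IsMinZeroSum (A.map (fun h => ((0 : ZMod 2), h)) + B.map (fun h => ((1 : ZMod 2), h))) →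
      (∀ h ∈ B, h ≠ 0) →
      crossNum A + crossNum B / 2 ≤ 1 / (AddMonoid.exponent H : ℚ) + c ∨
      crossNum A + crossNum B / 2 ≤ c + 1 / 2 := by
  have hn : AddMonoid.exponent H ≠ 0 := AddMonoid.exponent_ne_zero_of_finite
  have hinl : ∀ A : Multiset H, IsMinZeroSum (A.map (fun h => ((0 : ZMod 2), h))) →
      crossNum A ≤ 1 / (AddMonoid.exponent H : ℚ) + c := by
    intro A hA
    apply hW
    refine ⟨A, ?_, rfl⟩
    exact mz_of_map (AddMonoidHom.inr (ZMod 2) H) (fun x y h => by simpa using h) A hA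
  intro N
  induction N using Nat.strong_induction_on with
  | _ N ih =>
  intro A B hB hmz hB0
  by_cases hnd : (B.map addOrderOf).Nodup
  · by_cases hBe : B = 0
    · subst hBe
      left
      simpa [crossNum] using hinl A (by simpa using hmz)
    · right
      have hcard : (B.card : ZMod 2) = 0 := by
        have := hmz.2.1
        rw [Multiset.sum_add, sum_map_mk_one, sum_map_mk_zero] at this
        simpa using congrArg Prod.fst this
      rw [add_comm] at hmz
      have h1 := mz_merge _ _ (by simpa using hBe) hmz
      rw [sum_map_mk_one, hcard] at h1
      have h2 := hinl (B.sum ::ₘ A) (by simpa using h1)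
      rw [crossNum_cons] at h2
      have h3 : 1 / (AddMonoid.exponent H : ℚ) ≤ 1 / (addOrderOf B.sum : ℚ) := by
        apply one_div_le_one_div_of_le
        · exact_mod_cast addOrderOf_pos B.sum
        · exact_mod_cast Nat.le_of_dvd (Nat.pos_of_ne_zero hn) (AddMonoid.addOrder_dvd_exponent _)
      have h4 : crossNum B ≤ ∑ d ∈ (AddMonoid.exponent H).divisors.erase 1, (1 : ℚ) / (d : ℚ) := by
        have : crossNum B = ∑ d ∈ (⟨B.map addOrderOf, hnd⟩ : Finset ℕ), (1 : ℚ) / (d : ℚ) := by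
          simp [crossNum, Finset.sum, Multiset.map_map]
        rw [this]
        apply Finset.sum_le_sum_of_subset_of_nonneg
        · intro d hd
          obtain ⟨h, hh, rfl⟩ := Multiset.mem_map.mp (Finset.mem_mk.mp hd)
          rw [Finset.mem_erase, Nat.mem_divisors]
          refine ⟨?_, AddMonoid.addOrder_dvd_exponent _, hn⟩
          rw [Ne, AddMonoid.addOrderOf_eq_one_iff]
          exact hB0 h hh
        · intros; positivity
      have h5 := Finset.add_sum_erase (AddMonoid.exponent H).divisors (fun d : ℕ => (1 : ℚ) / (d : ℚ))
        (Nat.one_mem_divisors.mpr hn)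
      simp only [Nat.cast_one, div_one] at h5
      linarith
  · obtain ⟨a, b, B', rfl, hab⟩ := exists_pair _ _ hnd
    have h1 : IsMinZeroSum (((a + b) ::ₘ A).map (fun h => ((0 : ZMod 2), h)) +
        B'.map (fun h => ((1 : ZMod 2), h))) := by
      have := mz_merge ({((1 : ZMod 2), a), ((1 : ZMod 2), b)} : Multiset (ZMod 2 × H))
        (A.map (fun h => ((0 : ZMod 2), h)) + B'.map (fun h => ((1 : ZMod 2), h))) (by simp)
        (by
          convert hmz using 1
          simp [← Multiset.singleton_add]
          abel)
      have h2 : (1 : ZMod 2) + 1 = 0 := by decide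
      simpa [h2] using this
    have h2 := ih B'.card (by rw [← hB]; simp) _ B' rfl h1
      (fun h hh => hB0 h (by simp [hh]))
    have h3 : (1 : ℚ) / (addOrderOf a : ℚ) ≤ 1 / (addOrderOf (a + b) : ℚ) := by
      apply one_div_le_one_div_of_le
      · exact_mod_cast addOrderOf_pos _
      · have : addOrderOf (a + b) ∣ addOrderOf a := by
          rw [addOrderOf_dvd_iff_nsmul_eq_zero, smul_add, addOrderOf_nsmul_eq_zero, hab,
            addOrderOf_nsmul_eq_zero, add_zero]
        exact_mod_cast Nat.le_of_dvd (addOrderOf_pos _) this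
    simp only [crossNum_cons, ← hab] at h2 ⊢
    rcases h2 with h2 | h2
    · left; linarith
    · right; linarith

lemma order_one {H : Type*} [AddCommGroup H] [Fintype H] (hodd : Odd (Fintype.card H)) (h : H) :
    addOrderOf ((1 : ZMod 2), h) = 2 * addOrderOf h := by
  rw [Prod.addOrderOf]
  simp only [ZMod.addOrderOf_one]
  apply Nat.Coprime.lcm_eq_mul
  rw [Nat.coprime_two_left]
  exact hodd.of_dvd_nat addOrderOf_dvd_card

lemma order_zero {H : Type*} [AddCommGroup H] (h : H) :
    addOrderOf ((0 : ZMod 2), h) = addOrderOf h := by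
  rw [Prod.addOrderOf]
  simp

lemma crossNum_zero {H : Type*} [AddCommGroup H] (A : Multiset H) :
    crossNum (A.map (fun h => ((0 : ZMod 2), h))) = crossNum A := by
  simp [crossNum, Multiset.map_map, order_zero]

lemma crossNum_one {H : Type*} [AddCommGroup H] [Fintype H] (hodd : Odd (Fintype.card H))
    (A : Multiset H) :
    crossNum (A.map (fun h => ((1 : ZMod 2), h))) = crossNum A / 2 := by
  induction A using Multiset.induction_on with
  | empty => simp [crossNum]
  | cons a A ih =>
    rw [Multiset.map_cons, crossNum_cons, ih, crossNum_cons, order_one hodd]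
    push_cast
    field_simp

lemma split_zmod2 {H : Type*} [AddCommGroup H] (S : Multiset (ZMod 2 × H)) :
    ∃ A B : Multiset H, S = A.map (fun h => ((0 : ZMod 2), h)) + B.map (fun h => ((1 : ZMod 2), h)) := by
  induction S using Multiset.induction_on with
  | empty => exact ⟨0, 0, by simp⟩
  | cons a S ih =>
    obtain ⟨A, B, rfl⟩ := ih
    obtain ⟨x, h⟩ := a
    have hx : x = 0 ∨ x = 1 := by revert x; decide
    rcases hx with rfl | rfl
    · exact ⟨h ::ₘ A, B, by simp⟩
    · exact ⟨A, h ::ₘ B, by simp⟩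

lemma upper {H : Type*} [AddCommGroup H] [Fintype H] (hodd : Odd (Fintype.card H)) (c : ℚ)
    (hW : ∀ k ∈ WSet H, k ≤ 1 / (AddMonoid.exponent H : ℚ) + c)
    (hdiv : ∑ d ∈ (AddMonoid.exponent H).divisors, (1 : ℚ) / (d : ℚ) < 2)
    (S : Multiset (ZMod 2 × H)) (hS : IsMinZeroSum S) :
    crossNum S ≤ 1 / (2 * (AddMonoid.exponent H : ℚ)) + (1 / 2 + c) := by
  have hn : AddMonoid.exponent H ≠ 0 := AddMonoid.exponent_ne_zero_of_finite
  have hn1 : (1 : ℚ) ≤ (AddMonoid.exponent H : ℚ) := by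
    exact_mod_cast Nat.one_le_iff_ne_zero.mpr hn
  have hhalf : 1 / (2 * (AddMonoid.exponent H : ℚ)) = 1 / (AddMonoid.exponent H : ℚ) / 2 := by
    field_simp
  have hpos : 0 < 1 / (AddMonoid.exponent H : ℚ) := by positivity
  have hle : 1 / (AddMonoid.exponent H : ℚ) ≤ 1 := by
    rw [div_le_one (by linarith)]; exact hn1
  rw [hhalf]
  obtain ⟨A, B, rfl⟩ := split_zmod2 S
  rw [crossNum_add, crossNum_zero, crossNum_one hodd]
  by_cases h0 : ∀ h ∈ B, h ≠ 0
  · rcases pair_bound c hW hdiv _ A B rfl hS h0 with h | h <;> linarith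
  · push Not at h0
    obtain ⟨h, hB, rfl⟩ := h0
    obtain ⟨B', rfl⟩ := Multiset.exists_cons_of_mem hB
    rw [mz_iff] at hS
    obtain ⟨-, hsum, hm⟩ := hS
    rw [Multiset.sum_add, sum_map_mk_one, sum_map_mk_zero] at hsum
    have hs2 : A.sum + B'.sum = 0 := by simpa using congrArg Prod.snd hsum
    have hs1 : ((B'.card : ZMod 2) + 1) = 0 := by simpa using congrArg Prod.fst hsum
    have hB' : B' ≠ 0 := by
      rintro rfl
      simp at hs1
    have hmz : IsMinZeroSum (A + B') := by
      rw [mz_iff]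
      refine ⟨by simp [hB'], by simpa using hs2, fun U V hUV hU => ?_⟩
      set R := A.map (fun h => ((0 : ZMod 2), h)) + B'.map (fun h => ((1 : ZMod 2), h)) with hR
      have hRm : R.map Prod.snd = U + V := by
        rw [← hUV]; simp [hR, Multiset.map_map]
      obtain ⟨U', V', h1, rfl, rfl⟩ := exists_of_le_map Prod.snd R U V hRm
      have hfull : A.map (fun h => ((0 : ZMod 2), h)) +
          (0 ::ₘ B').map (fun h => ((1 : ZMod 2), h)) = ((1 : ZMod 2), (0 : H)) ::ₘ (U' + V') := by
        rw [← h1, hR]; simp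
      rw [hfull] at hm
      have hU2 : U'.sum.2 = 0 := by
        rw [← hU]
        exact map_multiset_sum (AddMonoidHom.snd (ZMod 2) H) U'
      have hx : U'.sum.1 = 0 ∨ U'.sum.1 = 1 := by
        generalize U'.sum.1 = x
        revert x; decide
      rcases hx with hx | hx
      · rcases hm U' (((1 : ZMod 2), (0 : H)) ::ₘ V') (by simp) (Prod.ext hx hU2) with h | h
        · left; simp [h]
        · simp at h
      · rcases hm (((1 : ZMod 2), (0 : H)) ::ₘ U') V' (by simp)
          (by
            rw [Multiset.sum_cons]
            refine Prod.ext ?_ ?_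
            · simp only [Prod.fst_add, hx, Prod.fst_zero]; decide
            · simp [hU2]) with h | h
        · simp at h
        · right; simp [h]
    have hk := hW _ ⟨A + B', hmz, rfl⟩
    rw [crossNum_add] at hk
    obtain ⟨b, hb⟩ := Multiset.exists_mem_of_ne_zero hB'
    obtain ⟨B2, rfl⟩ := Multiset.exists_cons_of_mem hb
    have h3 : 1 / (AddMonoid.exponent H : ℚ) ≤ 1 / (addOrderOf b : ℚ) := by
      apply one_div_le_one_div_of_le
      · exact_mod_cast addOrderOf_pos b
      · exact_mod_cast Nat.le_of_dvd (Nat.pos_of_ne_zero hn) (AddMonoid.addOrder_dvd_exponent _)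
    have h4 : 0 ≤ crossNum B2 := by
      unfold crossNum
      apply Multiset.sum_nonneg
      intro x hx
      obtain ⟨g, -, rfl⟩ := Multiset.mem_map.mp hx
      positivity
    simp only [crossNum_cons, addOrderOf_zero, Nat.cast_one, div_one] at hk ⊢
    linarith

lemma zsf_pi {s : ℕ} (q : Fin s → ℕ) (hq : ∀ i, 0 < q i) (T : Multiset (∀ i, ZMod (q i)))
    (hT : T ≤ ∑ i, Multiset.replicate (q i - 1) (-Pi.single i (1 : ZMod (q i))))
    (hs : T.sum = 0) : T = 0 := by
  classical
  have hdec : ∀ (t : Finset (Fin s)) (T : Multiset (∀ i, ZMod (q i))),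
      T ≤ ∑ i ∈ t, Multiset.replicate (q i - 1) (-Pi.single i (1 : ZMod (q i))) →
      ∃ c : Fin s → ℕ, (∀ i, c i ≤ q i - 1) ∧
        T = ∑ i ∈ t, Multiset.replicate (c i) (-Pi.single i (1 : ZMod (q i))) := by
    intro t
    induction t using Finset.induction_on with
    | empty =>
      intro T hT
      exact ⟨0, by simp, by simpa using hT⟩
    | insert a t ha ih =>
      intro T hT
      rw [Finset.sum_insert ha] at hT
      set X := Multiset.replicate (q a - 1) (-Pi.single a (1 : ZMod (q a)) : ∀ i, ZMod (q i)) with hX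
      have h1 : T ∩ X ≤ X := Multiset.inter_le_right
      obtain ⟨k, hk, hk2⟩ := Multiset.le_replicate_iff.mp h1
      have h2 : T - X ≤ ∑ i ∈ t, Multiset.replicate (q i - 1) (-Pi.single i (1 : ZMod (q i))) :=
        tsub_le_iff_left.mpr hT
      obtain ⟨c, hc, hc2⟩ := ih _ h2
      refine ⟨Function.update c a k, ?_, ?_⟩
      · intro i
        by_cases hi : i = a
        · subst hi; simpa using hk
        · simpa [hi] using hc i
      · rw [Finset.sum_insert ha]
        have : ∑ i ∈ t, Multiset.replicate (Function.update c a k i) (-Pi.single i (1 : ZMod (q i)) : ∀ i, ZMod (q i))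
            = T - X := by
          rw [hc2]
          apply Finset.sum_congr rfl
          intro i hi
          have : i ≠ a := by rintro rfl; exact ha hi
          simp [this]
        rw [this, Function.update_self, ← hk2]
        ext x
        simp only [Multiset.count_add, Multiset.count_inter, Multiset.count_sub]
        omega
  obtain ⟨c, hc, rfl⟩ := hdec _ T hT
  apply Finset.sum_eq_zero
  intro i _
  have h1 : ((c i : ℕ) : ZMod (q i)) = 0 := by
    have h2 := congrFun hs i
    rw [← Multiset.coe_sumAddMonoidHom, map_sum] at h2
    simp only [Multiset.coe_sumAddMonoidHom, Multiset.sum_replicate, Finset.sum_apply,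
      Pi.smul_apply, Pi.neg_apply, Pi.zero_apply] at h2
    rw [Finset.sum_eq_single i] at h2
    · simpa using h2
    · intro b _ hb
      simp [Pi.single_eq_of_ne hb.symm]
    · simp
  have h2 := (ZMod.natCast_eq_zero_iff _ _).mp h1
  have h3 : c i = 0 := Nat.eq_zero_of_dvd_of_lt h2 (by have := hc i; have := hq i; omega)
  simp [h3]

lemma crossNum_map_inj {G H : Type*} [AddCommGroup G] [AddCommGroup H] (f : H →+ G)
    (hf : Function.Injective f) (A : Multiset H) : crossNum (A.map f) = crossNum A := by
  simp [crossNum, Multiset.map_map, addOrderOf_injective f hf]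

lemma order_pi_one {s : ℕ} (q : Fin s → ℕ) :
    addOrderOf (1 : ∀ i, ZMod (q i)) = AddMonoid.exponent (∀ i, ZMod (q i)) := by
  apply Nat.dvd_antisymm (AddMonoid.addOrder_dvd_exponent _)
  apply AddMonoid.exponent_dvd_of_forall_nsmul_eq_zero
  intro g
  rw [← one_mul g, ← smul_mul_assoc, addOrderOf_nsmul_eq_zero, zero_mul]

lemma crossNum_base {s : ℕ} (q : Fin s → ℕ) (hq : ∀ i, 0 < q i) :
    crossNum (∑ i, Multiset.replicate (q i - 1) (-Pi.single i (1 : ZMod (q i)) : ∀ i, ZMod (q i)))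
      = ∑ i, ((q i : ℚ) - 1) / (q i : ℚ) := by
  have hadd : ∀ t : Finset (Fin s), crossNum (∑ i ∈ t, Multiset.replicate (q i - 1)
      (-Pi.single i (1 : ZMod (q i)) : ∀ i, ZMod (q i)))
      = ∑ i ∈ t, ((q i : ℚ) - 1) / (q i : ℚ) := by
    intro t
    induction t using Finset.induction_on with
    | empty => simp [crossNum]
    | insert a t ha ih =>
      rw [Finset.sum_insert ha, Finset.sum_insert ha, crossNum_add, ih]
      congr 1
      have h1 : addOrderOf (Pi.single a (1 : ZMod (q a)) : ∀ i, ZMod (q i)) = q a := by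
        have := addOrderOf_injective (AddMonoidHom.single (fun i => ZMod (q i)) a)
          (fun x y h => Pi.single_injective (M := fun i => ZMod (q i)) a h) 1
        rw [ZMod.addOrderOf_one] at this
        exact this
      have h2 : ((q a - 1 : ℕ) : ℚ) = (q a : ℚ) - 1 := by
        rw [Nat.cast_sub (hq a)]; simp
      simp only [crossNum, Multiset.map_replicate, addOrderOf_neg, h1, Multiset.sum_replicate,
        nsmul_eq_mul, h2]
      ring
  exact hadd _

lemma lower {H : Type*} [AddCommGroup H] [Fintype H] (hodd : Odd (Fintype.card H))
    {s : ℕ} (q : Fin s → ℕ) (hq : ∀ i, 0 < q i) (e : H ≃+ ∀ i, ZMod (q i)) :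
    ∃ S : Multiset (ZMod 2 × H), IsMinZeroSum S ∧ crossNum S =
      1 / (2 * (AddMonoid.exponent H : ℚ)) + (1 / 2 + ∑ i, ((q i : ℚ) - 1) / (q i : ℚ)) := by
  set M : Multiset (∀ i, ZMod (q i)) :=
    ∑ i, Multiset.replicate (q i - 1) (-Pi.single i (1 : ZMod (q i))) with hM
  set A : Multiset H := M.map e.symm with hA
  have hMsum : M.sum = 1 := by
    rw [hM, ← Multiset.coe_sumAddMonoidHom, map_sum]
    simp only [Multiset.coe_sumAddMonoidHom, Multiset.sum_replicate]
    funext i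
    rw [Finset.sum_apply, Finset.sum_eq_single i]
    · simp [Nat.cast_sub (Nat.one_le_iff_ne_zero.mpr (hq i).ne')]
    · intro b _ hb
      simp [Pi.single_eq_of_ne hb.symm]
    · simp
  have hAsum : A.sum = e.symm 1 := by
    rw [hA, ← hMsum]; exact (map_multiset_sum e.symm M).symm
  have hAfree : ∀ T ≤ A, T.sum = 0 → T = 0 := by
    intro T hT hs
    have h1 : T.map e ≤ M := by
      have := Multiset.map_le_map (f := e) hT
      simpa [hA, Multiset.map_map] using this
    have := zsf_pi q hq (T.map e) h1 (by rw [← map_multiset_sum, hs, _root_.map_zero])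
    simpa using this
  refine ⟨((1 : ZMod 2), -e.symm 1) ::ₘ ((1 : ZMod 2), (0 : H)) ::ₘ
    A.map (fun h => ((0 : ZMod 2), h)), mz_cons _ _ ?_ ?_, ?_⟩
  · intro T hT hT0 hs
    by_cases hmem : ((1 : ZMod 2), (0 : H)) ∈ T
    · obtain ⟨T', rfl⟩ := Multiset.exists_cons_of_mem hmem
      rw [Multiset.cons_le_cons_iff] at hT
      obtain ⟨V, hV⟩ := Multiset.le_iff_exists_add.mp hT
      obtain ⟨U', V', -, rfl, -⟩ := exists_of_le_map _ _ _ _ hV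
      rw [Multiset.sum_cons, sum_map_mk_zero] at hs
      have := congrArg Prod.fst hs
      simp at this
    · rw [Multiset.le_cons_of_notMem hmem] at hT
      obtain ⟨V, hV⟩ := Multiset.le_iff_exists_add.mp hT
      obtain ⟨U', V', h1, rfl, -⟩ := exists_of_le_map _ _ _ _ hV
      rw [sum_map_mk_zero] at hs
      have := hAfree U' (by rw [h1]; exact Multiset.le_add_right _ _) (by simpa using congrArg Prod.snd hs)
      simp [this] at hT0
  · rw [Multiset.sum_cons, sum_map_mk_zero, hAsum]
    refine Prod.ext ?_ ?_
    · simp; decide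
    · simp
  · have h1 : crossNum A = ∑ i, ((q i : ℚ) - 1) / (q i : ℚ) := by
      rw [← crossNum_base q hq, ← hM, hA]
      exact crossNum_map_inj e.symm.toAddMonoidHom e.symm.injective M
    have h2 : addOrderOf (-e.symm 1) = AddMonoid.exponent H := by
      rw [addOrderOf_neg, AddEquiv.addOrderOf_eq, order_pi_one]
      exact (AddMonoid.exponent_eq_of_addEquiv e).symm
    rw [crossNum_cons, crossNum_cons, crossNum_zero, order_one hodd, order_one hodd, h1, h2]
    simp

theorem stmt10 (H : Type*) [AddCommGroup H] [Fintype H]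
    (hodd : Odd (Fintype.card H))
    (s : ℕ) (q : Fin s → ℕ) (hq : ∀ i, IsPrimePow (q i))
    (e : H ≃+ ∀ i, ZMod (q i))
    (hKH : IsGreatest (WSet H)
      (1 / (AddMonoid.exponent H : ℚ) + ∑ i, ((q i : ℚ) - 1) / (q i : ℚ)))
    (hdiv : ∑ d ∈ (AddMonoid.exponent H).divisors, (1 : ℚ) / (d : ℚ) < 2) :
    IsGreatest (WSet (ZMod 2 × H))
      (1 / (AddMonoid.exponent (ZMod 2 × H) : ℚ) +
        ((1 : ℚ) / 2 + ∑ i, ((q i : ℚ) - 1) / (q i : ℚ))) := by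
  have hexp : AddMonoid.exponent (ZMod 2 × H) = 2 * AddMonoid.exponent H := by
    rw [AddMonoid.exponent_prod, ZMod.exponent]
    apply Nat.Coprime.lcm_eq_mul
    rw [Nat.coprime_two_left]
    refine hodd.of_dvd_nat ?_
    rw [← Nat.card_eq_fintype_card]
    exact AddGroup.exponent_dvd_nat_card
  rw [hexp]
  push_cast
  constructor
  · exact lower hodd q (fun i => (hq i).pos) e
  · rintro k ⟨S, hS, rfl⟩
    exact upper hodd _ (fun k hk => hKH.2 hk) hdiv S hS
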